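/- For all real numbers γ with 0 < γ < 1 and λ > 0 there exists a constant C > 0, depending only on n, p, α, γ, λ, C₁ and C₂, with the following property: let 0 < r₁ < r₂ and h ≥ 0 be real numbers and let v be a nonnegative continuous function on the closed annulus {r₁ ≤ |x| ≤ r₂} which is C¹ on the open annulus B_{r₁,r₂} and a solution of div A(x,Dv) + b(x)|Dv|^α ≥ χ_ω(x)·h in B_{r₁,r₂}, where ω = {x ∈ B_{r₁,r₂} : v(x) > 0} and χ_ω is the characteristic function of ω. Suppose that ρ ↦ M(ρ;v) is nondecreasing on [r₁, r₂], that M(r₂;v) > M(r₁;v) ≥ γ·M(r₂;v), and that (M(r₂;v) − M(r₁;v))^{α−p+1}·(r₂ − r₁)^{p−α}·ess sup_{B_{r₁,r₂}} b ≥ λ. Then (M(r₂;v) − M(r₁;v))^α·ess sup_{B_{r₁,r₂}} b ≥ C·(r₂ − r₁)^α·h. -/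

import Mathlib

open MeasureTheory Metric Set Filter
open scoped RealInnerProductSpace ENNReal

noncomputable section

abbrev Euc (n : ℕ) := EuclideanSpace ℝ (Fin n)

/-- Weak solution of `div A(x,Dv) + b(x)|Dv|^α ≥ a(x)` on an open set `U`:
for every nonnegative test function `φ ∈ C₀^∞(U)`,
`-∫ A(x,Dv)·Dφ + ∫ b |Dv|^α φ ≥ ∫ a φ`. -/
def IsWeakSol {n : ℕ} (A : Euc n → Euc n → Euc n) (b : Euc n → ℝ) (α : ℝ)
    (a : Euc n → ℝ) (U : Set (Euc n)) (v : Euc n → ℝ) : Prop :=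
  ∀ φ : Euc n → ℝ, ContDiff ℝ (⊤ : ℕ∞) φ → HasCompactSupport φ → tsupport φ ⊆ U →
    (∀ x, 0 ≤ φ x) →
    (∫ x in U, a x * φ x) ≤
      (-(∫ x in U, ⟪A x (gradient v x), gradient φ x⟫)) +
        ∫ x in U, b x * ‖gradient v x‖ ^ α * φ x

/-- Structural conditions on `A`: measurability, coercivity and growth. -/
def StructCond {n : ℕ} (A : Euc n → Euc n → Euc n) (p C₁ C₂ : ℝ) : Prop :=
  Measurable (Function.uncurry A) ∧
    ∀ x ζ : Euc n, C₁ * ‖ζ‖ ^ p ≤ ⟪ζ, A x ζ⟫ ∧ ‖A x ζ‖ ≤ C₂ * ‖ζ‖ ^ (p - 1)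

/-- Locally bounded function on `ℝⁿ`. -/
def LocBdd {n : ℕ} (b : Euc n → ℝ) : Prop :=
  ∀ K : Set (Euc n), IsCompact K → ∃ C, ∀ x ∈ K, b x ≤ C

/-- `M(r; u) = max_{|x| = r} u x`. -/
def sphMax {n : ℕ} (u : Euc n → ℝ) (r : ℝ) : ℝ := sSup (u '' Metric.sphere (0 : Euc n) r)

/-- `g_θ(t) = inf_{s ∈ (t/θ, θ t)} g s`. -/
def ginf (g : ℝ → ℝ) (θ t : ℝ) : ℝ := sInf (g '' Set.Ioo (t / θ) (θ * t))

/-- The open annulus `{x : r₁ < |x| < r₂}`. -/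
def Ann (n : ℕ) (r₁ r₂ : ℝ) : Set (Euc n) := {x : Euc n | r₁ < ‖x‖ ∧ ‖x‖ < r₂}

/-- `q_σ(r) = ess inf_{r/σ < |x| < σ r} q x`. -/
def qinf {n : ℕ} (q : Euc n → ℝ) (σ r : ℝ) : ℝ :=
  essInf q (volume.restrict (Ann n (r / σ) (σ * r)))

/-- `f_σ(r) = q_σ(r) / (1 + r q_σ(r)^{(α-p+1)/α} ess sup_{r/σ<|x|<σr} b^{(p-1)/α})`. -/
def fdef {n : ℕ} (q b : Euc n → ℝ) (p α σ r : ℝ) : ℝ :=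
  qinf q σ r /
    (1 + r * qinf q σ r ^ ((α - p + 1) / α) *
      essSup (fun x => b x ^ ((p - 1) / α)) (volume.restrict (Ann n (r / σ) (σ * r))))


lemma degiorgi_iter (n : ℕ) (hn : 2 ≤ n) (Cs γ : ℝ) (hCs : 0 < Cs) (hγ : 0 < γ) :
    ∃ ε : ℝ, 0 < ε ∧ ∀ m : ℝ → ℝ, (∀ k, 0 ≤ m k) → Antitone m →
      (∀ k k', 0 ≤ k → k < k' → (k' - k) ^ 2 * m k' ^ (1 - 1 / (n : ℝ)) ≤ Cs * m k) →
      m (γ / 2) ≤ ε → m (3 * γ / 4) = 0 := by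
  have hn0 : (0 : ℝ) < n := by positivity
  have hn1 : (1 : ℝ) / n ≤ 1 / 2 := by
    apply one_div_le_one_div_of_le (by norm_num); exact_mod_cast hn
  set θ : ℝ := 1 - 1 / (n : ℝ) with hθ
  have hθ0 : 0 < θ := by rw [hθ]; linarith
  set D : ℝ := 64 * Cs / γ ^ 2 with hD
  have hD0 : 0 < D := by positivity
  set μ : ℝ := (1 / 4 : ℝ) ^ n with hμ
  have hμ0 : 0 < μ := by positivity
  have hμ1 : μ < 1 := by
    apply pow_lt_one₀ (by norm_num) (by norm_num) (by omega)
  have hμn : μ ^ (1 / (n : ℝ)) = 1 / 4 := by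
    rw [hμ, one_div (n : ℝ), Real.pow_rpow_inv_natCast (by norm_num) (by omega)]
  set ε : ℝ := (μ ^ θ / D) ^ n with hε
  have hε0 : 0 < ε := by positivity
  have hεn : ε ^ (1 / (n : ℝ)) = μ ^ θ / D := by
    rw [hε, one_div (n : ℝ), Real.pow_rpow_inv_natCast (by positivity) (by omega)]
  refine ⟨ε, hε0, fun m hm0 hanti hm hme => ?_⟩
  have split : ∀ x : ℝ, 0 < x → x = x ^ θ * x ^ (1 / (n : ℝ)) := by
    intro x hx
    rw [← Real.rpow_add hx, hθ]; simp
  set κ : ℕ → ℝ := fun j => γ * (3 / 4 - (1 / 2) ^ j / 4) with hκ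
  have key : ∀ j : ℕ, m (κ j) ≤ ε * μ ^ j := by
    intro j
    induction j with
    | zero =>
      have : κ 0 = γ / 2 := by simp only [hκ]; ring
      rw [this]; simpa using hme
    | succ j ih =>
      have hpj : (0 : ℝ) < (1 / 2) ^ j := by positivity
      have hpj1 : ((1 : ℝ) / 2) ^ j ≤ 1 := pow_le_one₀ (by norm_num) (by norm_num)
      have h1 := hm (κ j) (κ (j + 1)) (by simp only [hκ]; apply mul_nonneg hγ.le; linarith)
        (by simp only [hκ]; rw [pow_succ]; apply mul_lt_mul_of_pos_left _ hγ; linarith)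
      have h2 : κ (j + 1) - κ j = γ * (1 / 2) ^ j / 8 := by simp only [hκ]; rw [pow_succ]; ring
      rw [h2] at h1
      have h4 : ((4 : ℝ) ^ j) * ((1 / 2) ^ j) ^ 2 = 1 := by
        rw [← pow_mul, mul_comm j 2, pow_mul, ← mul_pow]; norm_num
      have h3 : m (κ (j + 1)) ^ θ ≤ D * 4 ^ j * m (κ j) := by
        have : m (κ (j + 1)) ^ θ = D * 4 ^ j / Cs * ((γ * (1 / 2) ^ j / 8) ^ 2 * m (κ (j + 1)) ^ θ) := by
          have : D * 4 ^ j / Cs * ((γ * (1 / 2) ^ j / 8) ^ 2 * m (κ (j + 1)) ^ θ)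
             = (((4 : ℝ) ^ j) * ((1 / 2) ^ j) ^ 2) * m (κ (j + 1)) ^ θ := by
            rw [hD]; field_simp; ring
          rw [this, h4, one_mul]
        rw [this]
        calc _ ≤ D * 4 ^ j / Cs * (Cs * m (κ j)) := by gcongr
          _ = _ := by field_simp
      have h5 : D * 4 ^ j * (ε * μ ^ j) = (ε * μ ^ (j + 1)) ^ θ := by
        have e1 : ε = ε ^ θ * (μ ^ θ / D) := by rw [← hεn]; exact split ε hε0
        have e2 : μ ^ j = (μ ^ j) ^ θ * (1 / 4) ^ j := by
          have := split (μ ^ j) (by positivity)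
          have h' : (μ ^ j) ^ (1 / (n : ℝ)) = (1 / 4) ^ j := by
            rw [← hμn, ← Real.rpow_natCast, ← Real.rpow_natCast, ← Real.rpow_mul hμ0.le,
              ← Real.rpow_mul hμ0.le, mul_comm]
          rw [h'] at this; exact this
        rw [Real.mul_rpow hε0.le (by positivity), pow_succ, Real.mul_rpow (by positivity) hμ0.le]
        have h44 : (4 : ℝ) ^ j * (1 / 4) ^ j = 1 := by rw [← mul_pow]; norm_num
        calc D * 4 ^ j * (ε * μ ^ j) = D * 4 ^ j * ((ε ^ θ * (μ ^ θ / D)) * ((μ ^ j) ^ θ * (1 / 4) ^ j)) := by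
              rw [← e1, ← e2]
          _ = (4 ^ j * (1 / 4) ^ j) * (ε ^ θ * ((μ ^ j) ^ θ * μ ^ θ)) := by field_simp
          _ = _ := by rw [h44, one_mul]
      have h6 : m (κ (j + 1)) ^ θ ≤ (ε * μ ^ (j + 1)) ^ θ := by
        rw [← h5]; exact h3.trans (by gcongr)
      exact (Real.rpow_le_rpow_iff (hm0 _) (by positivity) hθ0).1 h6
  have hlim : Tendsto (fun j : ℕ => ε * μ ^ j) atTop (nhds 0) := by
    simpa using (tendsto_pow_atTop_nhds_zero_of_lt_one hμ0.le hμ1).const_mul ε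
  apply le_antisymm _ (hm0 _)
  refine ge_of_tendsto' hlim fun j => le_trans (hanti ?_) (key j)
  have hpj : (0 : ℝ) < (1 / 2) ^ j := by positivity
  simp only [hκ]; nlinarith
lemma sobolev_meas (n : ℕ) (hn : 2 ≤ n) : ∃ S : ℝ, 0 < S ∧ ∀ φ : Euc n → ℝ, ContDiff ℝ 1 φ →
    HasCompactSupport φ → ∀ (c : ℝ) (T : Set (Euc n)), 0 < c →
      (∀ x ∈ T, c ≤ φ x) →
      c * (volume.real T) ^ (1 - 1 / (n : ℝ)) ≤ S * ∫ x, ‖fderiv ℝ φ x‖ := by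
  have hn0 : (1 : ℝ) < n := by exact_mod_cast hn
  set q : NNReal := Real.toNNReal ((n : ℝ) / (n - 1)) with hq
  have hq' : (q : ℝ) = (n : ℝ) / (n - 1) := by
    rw [hq, Real.coe_toNNReal]; apply div_nonneg <;> linarith
  have hconj : NNReal.HolderConjugate (Module.finrank ℝ (Euc n) : NNReal) q := by
    rw [NNReal.holderConjugate_iff]
    simp only [finrank_euclideanSpace, Fintype.card_fin]
    refine ⟨by exact_mod_cast hn, ?_⟩
    rw [← NNReal.coe_inj]; push_cast; rw [hq']
    have : (n : ℝ) - 1 ≠ 0 := by linarith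
    field_simp; ring
  set S0 : NNReal := eLpNormLESNormFDerivOneConst (volume : Measure (Euc n)) (q : ℝ) with hS0
  refine ⟨S0 + 1, by positivity, fun φ hφ hφc c T hc hT => ?_⟩
  have hs := eLpNorm_le_eLpNorm_fderiv_one (volume : Measure (Euc n)) hφ hφc hconj
  have hqpos : 0 < (q : ℝ) := by rw [hq']; apply div_pos <;> linarith
  have hq0 : (q : ENNReal) ≠ 0 := by
    simp only [ne_eq, ENNReal.coe_eq_zero]; intro h; rw [h] at hqpos; simp at hqpos
  have hcheb := mul_meas_ge_le_pow_eLpNorm' (volume : Measure (Euc n)) hq0 ENNReal.coe_ne_top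
    hφ.continuous.aestronglyMeasurable (ENNReal.ofReal c)
  have hdc : Continuous (fderiv ℝ φ) := hφ.continuous_fderiv (by norm_num)
  have hint : Integrable (fderiv ℝ φ) (volume : Measure (Euc n)) :=
    hdc.integrable_of_hasCompactSupport (hφc.fderiv (𝕜 := ℝ))
  have h1 : eLpNorm (fderiv ℝ φ) 1 (volume : Measure (Euc n)) = ENNReal.ofReal (∫ x, ‖fderiv ℝ φ x‖) := by
    rw [eLpNorm_one_eq_lintegral_enorm, ofReal_integral_norm_eq_lintegral_enorm hint]
  rw [h1] at hs
  set I := ∫ x, ‖fderiv ℝ φ x‖ with hI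
  have hI0 : 0 ≤ I := integral_nonneg fun _ => norm_nonneg _
  have hsub : T ⊆ {x | ENNReal.ofReal c ≤ ‖φ x‖ₑ} := by
    intro x hx
    simp only [mem_ofPred_eq]
    rw [← ofReal_norm]
    exact ENNReal.ofReal_le_ofReal ((hT x hx).trans (le_abs_self _))
  have h2 : ENNReal.ofReal c ^ (q : ℝ) * volume T ≤ (ENNReal.ofReal (S0 * I)) ^ (q : ℝ) := by
    have e : ENNReal.ofReal (S0 * I) = S0 * ENNReal.ofReal I := by
      rw [ENNReal.ofReal_mul (by positivity), ENNReal.ofReal_coe_nnreal]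
    rw [e]
    simp only [ENNReal.coe_toReal] at hcheb
    calc _ ≤ _ := by gcongr
      _ ≤ _ := hcheb
      _ ≤ _ := by gcongr
  have h3 := ENNReal.toReal_mono (by
    apply ENNReal.rpow_ne_top_of_nonneg hqpos.le ENNReal.ofReal_ne_top) h2
  rw [ENNReal.toReal_mul, ← ENNReal.toReal_rpow, ← ENNReal.toReal_rpow, ENNReal.toReal_ofReal hc.le,
    ENNReal.toReal_ofReal (by positivity)] at h3
  change c ^ (q : ℝ) * volume.real T ≤ _ at h3
  have h4 : (c * volume.real T ^ (1 - 1 / (n : ℝ))) ^ (q : ℝ) ≤ (S0 * I) ^ (q : ℝ) := by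
    rw [Real.mul_rpow hc.le (by positivity), ← Real.rpow_mul measureReal_nonneg]
    have : (1 - 1 / (n : ℝ)) * q = 1 := by
      rw [hq']
      have : (n : ℝ) - 1 ≠ 0 := by linarith
      field_simp
    rw [this, Real.rpow_one]; exact h3
  have h5 := (Real.rpow_le_rpow_iff (by positivity) (by positivity) hqpos).1 h4
  nlinarith
/-- Integral inequality against `C¹` test functions. -/
def TestIneq {n : ℕ} (U : Set (Euc n)) (f0 : Euc n → ℝ) (F : Euc n → Euc n) : Prop :=
  ∀ φ : Euc n → ℝ, ContDiff ℝ 1 φ → HasCompactSupport φ → tsupport φ ⊆ U → (∀ x, 0 ≤ φ x) →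
    Integrable (fun x => f0 x * φ x - fderiv ℝ φ x (F x)) ∧
      0 ≤ ∫ x, (f0 x * φ x - fderiv ℝ φ x (F x))

def Psi (s k t : ℝ) : ℝ := Real.exp (s * t) * (max (t - k) 0) ^ 2

def dPsi (s k t : ℝ) : ℝ :=
  Real.exp (s * t) * (s * (max (t - k) 0) ^ 2 + 2 * max (t - k) 0)

lemma hasDerivAt_pos_sq (t : ℝ) :
    HasDerivAt (fun t : ℝ => (max t 0) ^ 2) (2 * max t 0) t := by
  rcases lt_trichotomy t 0 with h | h | h
  · have : (fun t : ℝ => (max t 0) ^ 2) =ᶠ[nhds t] fun _ => 0 := by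
      filter_upwards [gt_mem_nhds h] with x hx
      rw [max_eq_right hx.le]; simp
    rw [max_eq_right h.le, mul_zero]
    exact (hasDerivAt_const t (0 : ℝ)).congr_of_eventuallyEq this
  · subst h
    rw [hasDerivAt_iff_isLittleO_nhds_zero]
    simp only [zero_add, max_self, mul_zero, smul_zero, sub_zero, ne_eq, OfNat.ofNat_ne_zero,
      not_false_eq_true, zero_pow]
    refine Asymptotics.IsBigO.trans_isLittleO ?_
      (Asymptotics.isLittleO_pow_id (𝕜 := ℝ) (n := 2) (by norm_num))
    apply Asymptotics.IsBigO.of_bound 1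
    filter_upwards with x
    rw [Real.norm_eq_abs, Real.norm_eq_abs, abs_pow, abs_pow, one_mul]
    have : |max x 0| ≤ |x| := by
      rcases le_total x 0 with h | h
      · rw [max_eq_right h]; simp
      · rw [max_eq_left h]
    gcongr
  · have : (fun t : ℝ => (max t 0) ^ 2) =ᶠ[nhds t] fun t => t ^ 2 := by
      filter_upwards [lt_mem_nhds h] with x hx
      rw [max_eq_left hx.le]
    rw [max_eq_left h.le]
    refine HasDerivAt.congr_of_eventuallyEq ?_ this
    simpa using hasDerivAt_pow 2 t

lemma hasDerivAt_Psi (s k t : ℝ) : HasDerivAt (Psi s k) (dPsi s k t) t := by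
  have h1 : HasDerivAt (fun t : ℝ => Real.exp (s * t)) (Real.exp (s * t) * s) t := by
    simpa using ((hasDerivAt_id t).const_mul s).exp
  have h2 : HasDerivAt (fun t : ℝ => (max (t - k) 0) ^ 2) (2 * max (t - k) 0) t := by
    exact (hasDerivAt_pos_sq (t - k)).comp_sub_const t k
  refine (h1.mul h2).congr_deriv ?_
  unfold dPsi; ring

lemma contDiff_Psi (s k : ℝ) : ContDiff ℝ 1 (Psi s k) := by
  rw [contDiff_one_iff_deriv]
  refine ⟨fun t => (hasDerivAt_Psi s k t).differentiableAt, ?_⟩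
  have : deriv (Psi s k) = dPsi s k := funext fun t => (hasDerivAt_Psi s k t).deriv
  rw [this]; unfold dPsi; fun_prop

lemma Psi_of_le {s k t : ℝ} (h : t ≤ k) : Psi s k t = 0 := by
  unfold Psi; rw [max_eq_right (by linarith)]; simp

lemma dPsi_of_le {s k t : ℝ} (h : t ≤ k) : dPsi s k t = 0 := by
  unfold dPsi; rw [max_eq_right (by linarith)]; simp

lemma Psi_nonneg (s k t : ℝ) : 0 ≤ Psi s k t := by unfold Psi; positivity

lemma dPsi_nonneg {s : ℝ} (hs : 0 ≤ s) (k t : ℝ) : 0 ≤ dPsi s k t := by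
  unfold dPsi
  have : 0 ≤ max (t - k) 0 := le_max_right _ _
  positivity

lemma Psi_le_dPsi {s : ℝ} (k t : ℝ) : s * Psi s k t ≤ dPsi s k t := by
  unfold Psi dPsi
  have : 0 ≤ max (t - k) 0 := le_max_right _ _
  have := Real.exp_pos (s * t)
  nlinarith [mul_nonneg this.le ‹0 ≤ max (t - k) 0›]

lemma dPsi_le {s : ℝ} (hs : 0 ≤ s) {k t : ℝ} (hk : 0 ≤ k) (ht : t ≤ 1) :
    dPsi s k t ≤ Real.exp s * (s + 2) := by
  unfold dPsi
  have h0 : 0 ≤ max (t - k) 0 := le_max_right _ _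
  have h1 : max (t - k) 0 ≤ 1 := max_le (by linarith) (by norm_num)
  have h2 : Real.exp (s * t) ≤ Real.exp s := Real.exp_le_exp.2 (by nlinarith)
  have h3 : (max (t - k) 0) ^ 2 ≤ 1 := pow_le_one₀ h0 h1
  have h4 : s * (max (t - k) 0) ^ 2 + 2 * max (t - k) 0 ≤ s + 2 := by nlinarith
  gcongr

lemma le_Psi {s : ℝ} (hs : 0 ≤ s) {k k' t : ℝ} (hk : 0 ≤ k) (hkk : k < k') (ht : k' < t) :
    (k' - k) ^ 2 ≤ Psi s k t := by
  unfold Psi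
  rw [max_eq_left (by linarith)]
  have h1 : 1 ≤ Real.exp (s * t) := Real.one_le_exp (mul_nonneg hs (by linarith))
  have h2 : (k' - k) ^ 2 ≤ (t - k) ^ 2 := by
    apply pow_le_pow_left₀ <;> linarith
  nlinarith [sq_nonneg (t - k)]

lemma young_simple {p C₁ C₂ X : ℝ} (hp : 1 < p) (hC₁ : 0 < C₁) (hC₂ : 0 < C₂) (hX : 0 ≤ X) :
    4 * C₂ * X ^ (p - 1) ≤ C₁ / 2 * X ^ p + 4 * C₂ * (8 * C₂ / C₁) ^ (p - 1) := by
  have hXp : 0 ≤ X ^ p := by positivity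
  have hXp1 : 0 ≤ X ^ (p - 1) := by positivity
  rcases le_total X (8 * C₂ / C₁) with h | h
  · have : X ^ (p - 1) ≤ (8 * C₂ / C₁) ^ (p - 1) := Real.rpow_le_rpow hX h (by linarith)
    have h2 : 4 * C₂ * X ^ (p - 1) ≤ 4 * C₂ * (8 * C₂ / C₁) ^ (p - 1) := by gcongr
    nlinarith
  · have hpos : 0 < X := lt_of_lt_of_le (by positivity) h
    have e : X ^ p = X * X ^ (p - 1) := by
      rw [← Real.rpow_one_add' hX (by linarith)]; congr 1; ring
    have h3 : 8 * C₂ ≤ X * C₁ := by rwa [div_le_iff₀ hC₁] at h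
    have h4 : (0 : ℝ) ≤ 4 * C₂ * (8 * C₂ / C₁) ^ (p - 1) := by positivity
    rw [e]
    nlinarith [mul_le_mul_of_nonneg_right h3 hXp1]

lemma le_one_add_rpow {q p X : ℝ} (hq : 0 ≤ q) (hqp : q ≤ p) (hX : 0 ≤ X) : X ^ q ≤ 1 + X ^ p := by
  have hXp : 0 ≤ X ^ p := by positivity
  rcases le_total X 1 with h | h
  · have := Real.rpow_le_one hX h hq
    linarith
  · have := Real.rpow_le_rpow_of_exponent_le h hqp
    linarith

lemma pointwise_energy {p C₁ C₂ X L Ψ Ψ' f0 g e a : ℝ} (hp : 1 < p) (hC₁ : 0 < C₁) (hC₂ : 0 < C₂)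
    (hX : 0 ≤ X) (hΨ : 0 ≤ Ψ) (hΨ' : 0 ≤ Ψ') (hL : L * Ψ ≤ C₁ / 4 * Ψ')
    (hf : f0 ≤ L * (1 + X ^ p) - a) (hg : C₁ * X ^ p ≤ g) (he : e ≤ 4 * C₂ * X ^ (p - 1)) :
    f0 * Ψ - Ψ' * (g - e) ≤ (C₁ / 4 + 4 * C₂ * (8 * C₂ / C₁) ^ (p - 1) + 5 * C₁ / 4) * Ψ'
      - a * Ψ - C₁ / 4 * (Ψ' * (X + 4)) := by
  have hXp : 0 ≤ X ^ p := by positivity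
  have h1 := young_simple hp hC₁ hC₂ hX
  have h2 : X ≤ 1 + X ^ p := by simpa using le_one_add_rpow (q := 1) zero_le_one hp.le hX
  set K := 4 * C₂ * (8 * C₂ / C₁) ^ (p - 1)
  set Y := X ^ p
  have a1 : f0 * Ψ ≤ (L * (1 + Y) - a) * Ψ := by gcongr
  have a2 : (L * Ψ) * (1 + Y) ≤ (C₁ / 4 * Ψ') * (1 + Y) := by gcongr
  have a3 : Ψ' * (C₁ * Y - (C₁ / 2 * Y + K)) ≤ Ψ' * (g - e) := by gcongr; linarith
  have a4 : C₁ / 4 * (Ψ' * X) ≤ C₁ / 4 * (Ψ' * (1 + Y)) := by gcongr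
  nlinarith
/-- The truncated test function. -/
def tst {n : ℕ} (w : Euc n → ℝ) (s k : ℝ) (x : Euc n) : ℝ :=
  open Classical in if x ∈ ball (0 : Euc n) 1 then Psi s k (w x - 2 * ‖x‖ ^ 2) else 0

def lev {n : ℕ} (w : Euc n → ℝ) (k : ℝ) : Set (Euc n) :=
  {x | x ∈ ball (0 : Euc n) 1 ∧ k < w x - 2 * ‖x‖ ^ 2}

section core
variable {n : ℕ} {w : Euc n → ℝ} {s k : ℝ}

lemma tst_nonneg (x : Euc n) : 0 ≤ tst w s k x := by
  unfold tst; split_ifs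
  · exact Psi_nonneg _ _ _
  · exact le_rfl

lemma tst_of_mem {x : Euc n} (hx : x ∈ ball (0 : Euc n) 1) :
    tst w s k x = Psi s k (w x - 2 * ‖x‖ ^ 2) := by
  unfold tst; rw [if_pos hx]

lemma tst_zero (hw1 : ∀ x ∈ ball (0 : Euc n) 1, w x ≤ 1) (hk : 0 ≤ k) {x : Euc n}
    (hx : 3 / 4 < ‖x‖) : tst w s k x = 0 := by
  unfold tst; split_ifs with h
  · apply Psi_of_le
    have := hw1 x h
    nlinarith
  · rfl

lemma tst_tsupport (hw1 : ∀ x ∈ ball (0 : Euc n) 1, w x ≤ 1) (hk : 0 ≤ k) :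
    tsupport (tst w s k) ⊆ closedBall 0 (3 / 4) := by
  apply closure_minimal _ isClosed_closedBall
  intro x hx
  rw [mem_closedBall_zero_iff]
  by_contra hcon
  exact hx (tst_zero hw1 hk (not_le.1 hcon))

lemma tst_compact (hw1 : ∀ x ∈ ball (0 : Euc n) 1, w x ≤ 1) (hk : 0 ≤ k) :
    HasCompactSupport (tst w s k) :=
  (isCompact_closedBall (0 : Euc n) (3 / 4)).of_isClosed_subset isClosed_closure
    (tst_tsupport hw1 hk)

lemma tst_eventuallyEq {x : Euc n} (hx : x ∈ ball (0 : Euc n) 1) :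
    tst w s k =ᶠ[nhds x] fun y => Psi s k (w y - 2 * ‖y‖ ^ 2) := by
  filter_upwards [isOpen_ball.mem_nhds hx] with y hy
  exact tst_of_mem hy

lemma tst_contDiff (hw : ContDiffOn ℝ 1 w (ball 0 1))
    (hw1 : ∀ x ∈ ball (0 : Euc n) 1, w x ≤ 1) (hk : 0 ≤ k) :
    ContDiff ℝ 1 (tst w s k) := by
  rw [contDiff_iff_contDiffAt]
  intro x
  by_cases hx : x ∈ ball (0 : Euc n) 1
  · have h1 : ContDiffAt ℝ 1 w x := hw.contDiffAt (isOpen_ball.mem_nhds hx)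
    have h2 : ContDiffAt ℝ 1 (fun y => w y - 2 * ‖y‖ ^ 2) x :=
      h1.sub (contDiffAt_const.mul (contDiff_norm_sq ℝ).contDiffAt)
    exact ((contDiff_Psi s k).contDiffAt.comp x h2).congr_of_eventuallyEq (tst_eventuallyEq hx)
  · have hx' : 3 / 4 < ‖x‖ := by
      rw [mem_ball_zero_iff, not_lt] at hx; linarith
    have : tst w s k =ᶠ[nhds x] fun _ => 0 := by
      filter_upwards [continuous_norm.continuousAt.eventually (lt_mem_nhds hx')] with y hy
      exact tst_zero hw1 hk hy
    exact contDiffAt_const.congr_of_eventuallyEq this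

lemma tst_fderiv (hw : ContDiffOn ℝ 1 w (ball 0 1)) {x : Euc n} (hx : x ∈ ball (0 : Euc n) 1) :
    fderiv ℝ (tst w s k) x =
      dPsi s k (w x - 2 * ‖x‖ ^ 2) • (fderiv ℝ w x - (4 : ℝ) • innerSL ℝ x) := by
  have h1 : HasFDerivAt w (fderiv ℝ w x) x :=
    ((hw.contDiffAt (isOpen_ball.mem_nhds hx)).differentiableAt (by norm_num)).hasFDerivAt
  have h3 : HasFDerivAt (fun y : Euc n => ‖y‖ ^ 2) (2 • innerSL ℝ x) x :=
    (hasStrictFDerivAt_norm_sq x).hasFDerivAt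
  have h2 : HasFDerivAt (fun y => w y - 2 * ‖y‖ ^ 2) (fderiv ℝ w x - (4 : ℝ) • innerSL ℝ x) x := by
    refine (h1.sub (h3.const_mul 2)).congr_fderiv ?_
    ext y; simp; ring
  exact (((hasDerivAt_Psi s k _).comp_hasFDerivAt x h2).congr_of_eventuallyEq
    (tst_eventuallyEq hx)).fderiv

lemma lev_isOpen (hw : ContDiffOn ℝ 1 w (ball 0 1)) : IsOpen (lev w k) := by
  have hc : ContinuousOn (fun x => w x - 2 * ‖x‖ ^ 2) (ball (0 : Euc n) 1) :=
    hw.continuousOn.sub (by fun_prop)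
  exact hc.isOpen_inter_preimage isOpen_ball isOpen_Ioi

lemma lev_energy {p C₁ C₂ L a : ℝ} (hp : 1 < p) (hC₁ : 0 < C₁) (hC₂ : 0 < C₂) (hL : 0 ≤ L)
    {f0 : Euc n → ℝ} {F : Euc n → Euc n}
    (hw : ContDiffOn ℝ 1 w (ball 0 1)) (hw1 : ∀ x ∈ ball (0 : Euc n) 1, w x ≤ 1)
    (hst : ∀ x ∈ ball (0 : Euc n) 1, 0 < w x → f0 x ≤ L * (1 + ‖fderiv ℝ w x‖ ^ p) - a ∧
      C₁ * ‖fderiv ℝ w x‖ ^ p ≤ fderiv ℝ w x (F x) ∧ ‖F x‖ ≤ C₂ * ‖fderiv ℝ w x‖ ^ (p - 1))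
    (hT : TestIneq (ball 0 1) f0 F) (hk : 0 ≤ k) (hs : s = 4 * L / C₁) :
    a * (∫ x, tst w s k x) + C₁ / 4 * ∫ x, ‖fderiv ℝ (tst w s k) x‖ ≤
      (C₁ / 4 + 4 * C₂ * (8 * C₂ / C₁) ^ (p - 1) + 5 * C₁ / 4) * (Real.exp s * (s + 2)) *
        volume.real (lev w k) := by
  set K := C₁ / 4 + 4 * C₂ * (8 * C₂ / C₁) ^ (p - 1) + 5 * C₁ / 4 with hK
  have hK0 : 0 ≤ K := by positivity
  have hs0 : 0 ≤ s := by rw [hs]; positivity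
  have hφ := tst_contDiff (s := s) hw hw1 hk
  have hφc := tst_compact (s := s) hw1 hk
  obtain ⟨hint, hpos⟩ := hT _ hφ hφc
    ((tst_tsupport hw1 hk).trans (closedBall_subset_ball (by norm_num))) tst_nonneg
  have hi1 : Integrable (tst w s k) := hφ.continuous.integrable_of_hasCompactSupport hφc
  have hi2 : Integrable (fun x => ‖fderiv ℝ (tst w s k) x‖) :=
    ((hφ.continuous_fderiv (by norm_num)).integrable_of_hasCompactSupport
      (hφc.fderiv (𝕜 := ℝ))).norm
  have hmeas : MeasurableSet (lev w k) := (lev_isOpen hw).measurableSet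
  have hfin : volume (lev w k) ≠ ⊤ :=
    ((measure_mono (fun x hx => hx.1)).trans_lt (measure_ball_lt_top (x := (0 : Euc n)) (r := 1))).ne
  have hi3 : Integrable (Set.indicator (lev w k) (fun _ => K * (Real.exp s * (s + 2)))) := by
    rw [integrable_indicator_iff hmeas]
    exact integrableOn_const hfin
  have hpt : ∀ x, f0 x * tst w s k x - fderiv ℝ (tst w s k) x (F x) ≤
      Set.indicator (lev w k) (fun _ => K * (Real.exp s * (s + 2))) x - a * tst w s k x
        - C₁ / 4 * ‖fderiv ℝ (tst w s k) x‖ := by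
    intro x
    by_cases hx : x ∈ ball (0 : Euc n) 1
    · rw [tst_fderiv hw hx, tst_of_mem hx]
      by_cases hxl : x ∈ lev w k
      · rw [Set.indicator_of_mem hxl]
        have hx1 : ‖x‖ ≤ 1 := (mem_ball_zero_iff.1 hx).le
        have hwpos : 0 < w x := by have := hxl.2; nlinarith [sq_nonneg ‖x‖]
        obtain ⟨h1, h2, h3⟩ := hst x hx hwpos
        set t := w x - 2 * ‖x‖ ^ 2 with ht
        have ht1 : t ≤ 1 := by have := hw1 x hx; nlinarith [sq_nonneg ‖x‖]
        have hLP : L * Psi s k t ≤ C₁ / 4 * dPsi s k t := by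
          have := Psi_le_dPsi (s := s) k t
          calc L * Psi s k t = C₁ / 4 * (s * Psi s k t) := by rw [hs]; field_simp
            _ ≤ _ := by gcongr
        have he : 4 * inner ℝ x (F x) ≤ 4 * C₂ * ‖fderiv ℝ w x‖ ^ (p - 1) := by
          have := real_inner_le_norm x (F x)
          have h5 : ‖x‖ * ‖F x‖ ≤ 1 * ‖F x‖ := by gcongr
          nlinarith
        have hmain := pointwise_energy hp hC₁ hC₂ (norm_nonneg _) (Psi_nonneg s k t)
          (dPsi_nonneg hs0 k t) hLP h1 h2 he
        have hn1 : ‖dPsi s k t • (fderiv ℝ w x - (4 : ℝ) • innerSL ℝ x)‖ ≤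
            dPsi s k t * (‖fderiv ℝ w x‖ + 4) := by
          rw [norm_smul, Real.norm_of_nonneg (dPsi_nonneg hs0 k t)]
          apply mul_le_mul_of_nonneg_left _ (dPsi_nonneg hs0 k t)
          refine (norm_sub_le _ _).trans ?_
          rw [norm_smul, innerSL_apply_norm]
          simp only [Real.norm_ofNat]; linarith
        have hn2 : C₁ / 4 * ‖dPsi s k t • (fderiv ℝ w x - (4 : ℝ) • innerSL ℝ x)‖ ≤
            C₁ / 4 * (dPsi s k t * (‖fderiv ℝ w x‖ + 4)) := by gcongr
        have hn3 : K * dPsi s k t ≤ K * (Real.exp s * (s + 2)) := by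
          have := dPsi_le hs0 hk ht1
          gcongr
        have hev : (dPsi s k t • (fderiv ℝ w x - (4 : ℝ) • innerSL ℝ x)) (F x) =
            dPsi s k t * (fderiv ℝ w x (F x) - 4 * inner ℝ x (F x)) := by
          simp
        rw [← hK] at hmain
        rw [hev]
        linarith
      · rw [Set.indicator_of_notMem hxl]
        have hle : w x - 2 * ‖x‖ ^ 2 ≤ k := by
          by_contra hcon; exact hxl ⟨hx, not_le.1 hcon⟩
        rw [Psi_of_le hle, dPsi_of_le hle]; simp
    · have hnt : x ∉ tsupport (tst w s k) := fun h => hx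
        (((tst_tsupport hw1 hk).trans (closedBall_subset_ball (by norm_num))) h)
      have hxl : x ∉ lev w k := fun h => hx h.1
      rw [Set.indicator_of_notMem hxl, image_eq_zero_of_notMem_tsupport hnt, fderiv_of_notMem_tsupport ℝ hnt]
      simp
  have hle := hpos.trans (integral_mono hint ((hi3.sub (hi1.const_mul a)).sub (hi2.const_mul _)) hpt)
  simp only [Pi.sub_apply] at hle
  rw [integral_sub (by exact hi3.sub (hi1.const_mul a)) (hi2.const_mul _),
    integral_sub hi3 (hi1.const_mul a), integral_const_mul,
    integral_const_mul, integral_indicator hmeas, setIntegral_const, smul_eq_mul] at hle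
  linarith

end core

lemma core (n : ℕ) (hn : 2 ≤ n) (p C₁ C₂ L γ : ℝ) (hp : 1 < p) (hC₁ : 0 < C₁) (hC₂ : 0 < C₂)
    (hL : 0 ≤ L) (hγ : 0 < γ) : ∃ C : ℝ, 0 < C ∧
    ∀ (w f0 : Euc n → ℝ) (F : Euc n → Euc n) (a : ℝ), 0 ≤ a → ContDiffOn ℝ 1 w (ball 0 1) →
    (∀ x ∈ ball (0 : Euc n) 1, w x ≤ 1) → γ ≤ w 0 →
    (∀ x ∈ ball (0 : Euc n) 1, 0 < w x → f0 x ≤ L * (1 + ‖fderiv ℝ w x‖ ^ p) - a ∧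
      C₁ * ‖fderiv ℝ w x‖ ^ p ≤ fderiv ℝ w x (F x) ∧ ‖F x‖ ≤ C₂ * ‖fderiv ℝ w x‖ ^ (p - 1)) →
    TestIneq (ball 0 1) f0 F → a ≤ C := by
  obtain ⟨S, hS, hsob⟩ := sobolev_meas n hn
  set s : ℝ := 4 * L / C₁ with hs
  have hs0 : 0 ≤ s := by positivity
  set K : ℝ := (C₁ / 4 + 4 * C₂ * (8 * C₂ / C₁) ^ (p - 1) + 5 * C₁ / 4) * (Real.exp s * (s + 2))
    with hK
  have hK0 : 0 < K := by positivity
  obtain ⟨ε, hε, hiter⟩ := degiorgi_iter n hn (4 * S * K / C₁) γ (by positivity) hγ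
  set V : ℝ := volume.real (ball (0 : Euc n) 1) with hV
  refine ⟨K * V * 4 / (γ ^ 2 * ε) + 1, by positivity, fun w f0 F a ha hw hw1 hw0 hst hT => ?_⟩
  by_contra hcon
  rw [not_le] at hcon
  have hen := fun k hk => lev_energy (s := s) (k := k) hp hC₁ hC₂ hL hw hw1 hst hT hk hs
  simp only [← hK] at hen
  have hsub : ∀ k, lev w k ⊆ ball (0 : Euc n) 1 := fun k x hx => hx.1
  have hfin : ∀ k, volume (lev w k) ≠ ⊤ := fun k =>
    ((measure_mono (hsub k)).trans_lt measure_ball_lt_top).ne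
  have hanti : Antitone fun k => volume.real (lev w k) := by
    intro k k' hkk
    exact measureReal_mono (fun x hx => ⟨hx.1, lt_of_le_of_lt hkk hx.2⟩) (hfin k)
  have hφpos : ∀ k, 0 ≤ ∫ x, tst w s k x := fun k => integral_nonneg tst_nonneg
  have hDpos : ∀ k, 0 ≤ ∫ x, ‖fderiv ℝ (tst w s k) x‖ := fun k =>
    integral_nonneg fun _ => norm_nonneg _
  have hlow : ∀ k k', 0 ≤ k → k < k' → ∀ x ∈ lev w k', (k' - k) ^ 2 ≤ tst w s k x := by
    intro k k' hk hkk x hx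
    rw [tst_of_mem hx.1]
    exact le_Psi hs0 hk hkk hx.2
  have h0 := hiter (fun k => volume.real (lev w k)) (fun k => measureReal_nonneg) hanti ?_ ?_
  · have hopen : IsOpen (lev w (3 * γ / 4)) := lev_isOpen hw
    have hne : (lev w (3 * γ / 4)).Nonempty := by
      refine ⟨0, mem_ball_self one_pos, ?_⟩
      simp only [norm_zero]; nlinarith
    have := (ENNReal.toReal_pos (hopen.measure_pos volume hne).ne' (hfin _))
    change volume.real (lev w (3 * γ / 4)) = 0 at h0
    rw [measureReal_def] at h0
    linarith
  · intro k k' hk hkk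
    have h1 := hsob (tst w s k) (tst_contDiff hw hw1 hk) (tst_compact hw1 hk) ((k' - k) ^ 2)
      (lev w k') (by have : 0 < k' - k := by linarith
                     positivity) (hlow k k' hk hkk)
    have h2 := hen k hk
    have h3 : 0 ≤ a * ∫ x, tst w s k x := mul_nonneg ha (hφpos k)
    have h4 : ∫ x, ‖fderiv ℝ (tst w s k) x‖ ≤ 4 * K / C₁ * volume.real (lev w k) := by
      have : C₁ / 4 * ∫ x, ‖fderiv ℝ (tst w s k) x‖ ≤ K * volume.real (lev w k) := by linarith
      calc _ = 4 / C₁ * (C₁ / 4 * ∫ x, ‖fderiv ℝ (tst w s k) x‖) := by field_simp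
        _ ≤ 4 / C₁ * (K * volume.real (lev w k)) := by gcongr
        _ = _ := by ring
    calc _ ≤ _ := h1
      _ ≤ S * (4 * K / C₁ * volume.real (lev w k)) := by gcongr
      _ = _ := by ring
  · change volume.real (lev w (γ / 2)) ≤ ε
    have h2 := hen 0 le_rfl
    have h3 : volume.real (lev w 0) ≤ V := measureReal_mono (hsub 0) measure_ball_lt_top.ne
    have h4 : 0 ≤ C₁ / 4 * ∫ x, ‖fderiv ℝ (tst w s 0) x‖ := mul_nonneg (by positivity) (hDpos 0)
    have hi1 : Integrable (tst w s 0) :=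
      (tst_contDiff hw hw1 le_rfl).continuous.integrable_of_hasCompactSupport (tst_compact hw1 le_rfl)
    have h5 := mul_meas_ge_le_integral_of_nonneg (μ := (volume : Measure (Euc n)))
      (f := tst w s 0) (Filter.Eventually.of_forall tst_nonneg) hi1 ((γ / 2 - 0) ^ 2)
    have h6 : volume.real (lev w (γ / 2)) ≤ volume.real {x | (γ / 2 - 0) ^ 2 ≤ tst w s 0 x} := by
      apply measureReal_mono
      · exact fun x hx => hlow 0 (γ / 2) le_rfl (by positivity) x hx
      · exact (hi1.measure_ge_lt_top (by rw [sub_zero]; positivity)).ne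
    have h7 : a * ((γ / 2 - 0) ^ 2 * volume.real (lev w (γ / 2))) ≤ K * V := by
      calc _ ≤ a * ∫ x, tst w s 0 x := by
            gcongr; exact le_trans (by gcongr) h5
        _ ≤ K * volume.real (lev w 0) := by linarith
        _ ≤ _ := by gcongr
    by_contra hc
    rw [not_le] at hc
    have h8 : K * V * 4 / (γ ^ 2 * ε) < a := by linarith
    rw [div_lt_iff₀ (by positivity)] at h8
    have h9 : a * (γ ^ 2 * ε) ≤ a * (γ ^ 2 * volume.real (lev w (γ / 2))) := by gcongr
    nlinarith
lemma smooth_approx {n : ℕ} {φ : Euc n → ℝ} (hφ : ContDiff ℝ 1 φ) (hφc : HasCompactSupport φ)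
    (hφ0 : ∀ x, 0 ≤ φ x) {d ε : ℝ} (hd : 0 < d) (hε : 0 < ε) :
    ∃ ψ : Euc n → ℝ, ContDiff ℝ (⊤ : ℕ∞) ψ ∧ tsupport ψ ⊆ cthickening d (tsupport φ) ∧
      (∀ x, 0 ≤ ψ x) ∧ (∀ x, |ψ x - φ x| ≤ ε) ∧ ∀ x, ‖fderiv ℝ ψ x - fderiv ℝ φ x‖ ≤ ε := by
  have hdc : Continuous (fderiv ℝ φ) := hφ.continuous_fderiv (by norm_num)
  have hu1 : UniformContinuous φ := hφc.uniformContinuous_of_continuous hφ.continuous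
  have hu2 : UniformContinuous (fderiv ℝ φ) :=
    (hφc.fderiv (𝕜 := ℝ)).uniformContinuous_of_continuous hdc
  obtain ⟨d1, hd1, h1⟩ := Metric.uniformContinuous_iff.1 hu1 ε hε
  obtain ⟨d2, hd2, h2⟩ := Metric.uniformContinuous_iff.1 hu2 ε hε
  set R := min d (min d1 d2) with hR
  have hR0 : 0 < R := by positivity
  let β : ContDiffBump (0 : Euc n) := ⟨R / 2, R, by positivity, by linarith⟩
  have hβR : β.rOut = R := rfl
  set f := β.normed (volume : Measure (Euc n)) with hf
  have hfsm : ContDiff ℝ (⊤ : ℕ∞) f := β.contDiff_normed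
  have hfloc : LocallyIntegrable f (volume : Measure (Euc n)) := hfsm.continuous.locallyIntegrable
  refine ⟨MeasureTheory.convolution f φ (ContinuousLinearMap.lsmul ℝ ℝ) volume, ?_, ?_, ?_, ?_, ?_⟩
  · exact HasCompactSupport.contDiff_convolution_left _ β.hasCompactSupport_normed hfsm
      hφ.continuous.locallyIntegrable
  · apply closure_minimal _ isClosed_cthickening
    refine (support_convolution_subset (ContinuousLinearMap.lsmul ℝ ℝ)).trans ?_
    rintro x ⟨y, hy, z, hz, rfl⟩
    rw [hf, β.support_normed_eq, hβR, mem_ball_zero_iff] at hy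
    apply mem_cthickening_of_dist_le (y + z) z d _ (subset_closure hz)
    rw [dist_eq_norm, add_sub_cancel_right]
    exact hy.le.trans (min_le_left _ _)
  · intro x
    rw [convolution_def]
    apply integral_nonneg
    intro t
    simp only [ContinuousLinearMap.lsmul_apply, Pi.zero_apply, smul_eq_mul]
    exact mul_nonneg (β.nonneg_normed t) (hφ0 _)
  · intro x
    have := β.dist_normed_convolution_le (μ := (volume : Measure (Euc n))) (g := φ) (x₀ := x) (ε := ε)
      hφ.continuous.aestronglyMeasurable (fun y hy => (h1 (lt_of_lt_of_le (mem_ball.1 hy)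
        ((min_le_right _ _).trans (min_le_left _ _)))).le)
    rwa [Real.dist_eq] at this
  · intro x
    have hder := hφc.hasFDerivAt_convolution_right (ContinuousLinearMap.lsmul ℝ ℝ) hfloc hφ x
    rw [hder.fderiv]
    have heq : MeasureTheory.convolution f (fderiv ℝ φ)
        ((ContinuousLinearMap.lsmul ℝ ℝ : ℝ →L[ℝ] ℝ →L[ℝ] ℝ).precompR (Euc n)) volume x =
      MeasureTheory.convolution f (fderiv ℝ φ) (ContinuousLinearMap.lsmul ℝ ℝ) volume x := by
      rw [convolution_def, convolution_def]
      congr 1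
    rw [heq, ← dist_eq_norm]
    exact β.dist_normed_convolution_le (μ := (volume : Measure (Euc n))) (g := fderiv ℝ φ) (x₀ := x)
      (ε := ε) hdc.aestronglyMeasurable (fun y hy => (h2 (lt_of_lt_of_le (mem_ball.1 hy)
        ((min_le_right _ _).trans (min_le_right _ _)))).le)

lemma test_zero {n : ℕ} {φ : Euc n → ℝ} {f0 : Euc n → ℝ} {F : Euc n → Euc n} {x : Euc n}
    (hx : x ∉ tsupport φ) : f0 x * φ x - fderiv ℝ φ x (F x) = 0 := by
  rw [image_eq_zero_of_notMem_tsupport hx, fderiv_of_notMem_tsupport ℝ hx]; simp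

lemma test_integrable {n : ℕ} {U : Set (Euc n)} {f0 : Euc n → ℝ} {F : Euc n → Euc n}
    (hf0 : AEStronglyMeasurable f0 (volume.restrict U))
    (hF : AEStronglyMeasurable F (volume.restrict U))
    (hb : ∀ K ⊆ U, IsCompact K → ∃ C, ∀ x ∈ K, |f0 x| ≤ C ∧ ‖F x‖ ≤ C)
    {φ : Euc n → ℝ} (hφ : ContDiff ℝ 1 φ) (hφc : HasCompactSupport φ) (hφU : tsupport φ ⊆ U) :
    Integrable (fun x => f0 x * φ x - fderiv ℝ φ x (F x)) := by
  have hdc : Continuous (fderiv ℝ φ) := hφ.continuous_fderiv (by norm_num)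
  rw [← integrableOn_iff_integrable_of_support_subset (s := tsupport φ)
    (fun x hx => by by_contra h; exact hx (test_zero h))]
  obtain ⟨C, hC⟩ := hb _ hφU hφc
  obtain ⟨B1, hB1⟩ := hφc.exists_bound_of_continuous hφ.continuous
  obtain ⟨B2, hB2⟩ := (hφc.fderiv (𝕜 := ℝ)).exists_bound_of_continuous hdc
  have hm : AEStronglyMeasurable (fun x => f0 x * φ x - fderiv ℝ φ x (F x))
      (volume.restrict (tsupport φ)) := by
    refine AEStronglyMeasurable.mono_measure ?_ (Measure.restrict_mono hφU le_rfl)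
    exact (hf0.mul hφ.continuous.aestronglyMeasurable).sub
      (isBoundedBilinearMap_apply.continuous.comp_aestronglyMeasurable
        (hdc.aestronglyMeasurable.prodMk hF))
  refine IntegrableOn.of_bound hφc.measure_lt_top hm (C * B1 + B2 * C) ?_
  refine (ae_restrict_mem (isClosed_tsupport φ).measurableSet).mono fun x hx => ?_
  obtain ⟨h1, h2⟩ := hC x hx
  have hC0 : 0 ≤ C := (abs_nonneg _).trans h1
  refine (norm_sub_le _ _).trans (add_le_add ?_ ?_)
  · rw [norm_mul]
    exact mul_le_mul h1 (hB1 x) (norm_nonneg _) hC0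
  · exact (ContinuousLinearMap.le_opNorm _ _).trans
      (mul_le_mul (hB2 x) h2 (norm_nonneg _) ((norm_nonneg _).trans (hB2 x)))

lemma testIneq_of_smooth {n : ℕ} {U : Set (Euc n)} (hU : IsOpen U) {f0 : Euc n → ℝ}
    {F : Euc n → Euc n}
    (hf0 : AEStronglyMeasurable f0 (volume.restrict U))
    (hF : AEStronglyMeasurable F (volume.restrict U))
    (hb : ∀ K ⊆ U, IsCompact K → ∃ C, ∀ x ∈ K, |f0 x| ≤ C ∧ ‖F x‖ ≤ C)
    (hsm : ∀ φ : Euc n → ℝ, ContDiff ℝ (⊤ : ℕ∞) φ → HasCompactSupport φ → tsupport φ ⊆ U →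
      (∀ x, 0 ≤ φ x) → 0 ≤ ∫ x, (f0 x * φ x - fderiv ℝ φ x (F x))) :
    TestIneq U f0 F := by
  intro φ hφ hφc hφU hφ0
  have hint := test_integrable hf0 hF hb hφ hφc hφU
  refine ⟨hint, ?_⟩
  obtain ⟨d, hd, hdU⟩ := IsCompact.exists_cthickening_subset_open hφc hU hφU
  set K := cthickening d (tsupport φ) with hK
  have hKc : IsCompact K := IsCompact.cthickening hφc
  obtain ⟨C, hC⟩ := hb K hdU hKc
  have hsubK : tsupport φ ⊆ K := self_subset_cthickening _
  have key : ∀ ε > 0, -(ε * (2 * |C| * volume.real K)) ≤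
      ∫ x, (f0 x * φ x - fderiv ℝ φ x (F x)) := by
    intro ε hε
    obtain ⟨ψ, hψ, hψs, hψ0, hψ1, hψ2⟩ := smooth_approx hφ hφc hφ0 hd hε
    have hψc : HasCompactSupport ψ := hKc.of_isClosed_subset isClosed_closure hψs
    have hψC1 : ContDiff ℝ 1 ψ := hψ.of_le (by exact_mod_cast le_top)
    have hi2 := test_integrable hf0 hF hb hψC1 hψc (hψs.trans hdU)
    have h0 := hsm ψ hψ hψc (hψs.trans hdU) hψ0
    have hi3 : Integrable (Set.indicator K (fun _ => ε * (2 * |C|))) := by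
      rw [integrable_indicator_iff hKc.measurableSet]
      exact integrableOn_const hKc.measure_lt_top.ne
    have hle : ∫ x, (f0 x * ψ x - fderiv ℝ ψ x (F x)) ≤
        ∫ x, ((f0 x * φ x - fderiv ℝ φ x (F x)) + Set.indicator K (fun _ => ε * (2 * |C|)) x) := by
      refine integral_mono hi2 (hint.add hi3) fun x => ?_
      by_cases hx : x ∈ K
      · simp only [Set.indicator_of_mem hx]
        obtain ⟨h1, h2⟩ := hC x hx
        have h1' := h1.trans (le_abs_self C)
        have h2' := h2.trans (le_abs_self C)
        have e1 : f0 x * (ψ x - φ x) ≤ |C| * ε := by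
          refine (le_abs_self _).trans ?_
          rw [abs_mul]
          exact mul_le_mul h1' (hψ1 x) (abs_nonneg _) (abs_nonneg _)
        have e2 : -((fderiv ℝ ψ x - fderiv ℝ φ x) (F x)) ≤ ε * |C| := by
          refine (neg_le_abs _).trans ?_
          exact ((fderiv ℝ ψ x - fderiv ℝ φ x).le_opNorm (F x)).trans
            (mul_le_mul (hψ2 x) h2' (norm_nonneg _) hε.le)
        rw [sub_apply] at e2
        linarith
      · simp only [Set.indicator_of_notMem hx]
        rw [test_zero (fun h => hx (hψs h)), test_zero (fun h => hx (hsubK h))]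
        simp
    rw [integral_add hint hi3, integral_indicator hKc.measurableSet, setIntegral_const,
      smul_eq_mul] at hle
    nlinarith
  by_contra hcon
  rw [not_le] at hcon
  set I := ∫ x, (f0 x * φ x - fderiv ℝ φ x (F x)) with hI
  set Q := 2 * |C| * volume.real K with hQ
  have hQ0 : 0 ≤ Q := by positivity
  have := key (-I / (2 * (Q + 1))) (by apply div_pos <;> linarith)
  have h3 : -I / (2 * (Q + 1)) * Q ≤ -I / 2 := by
    rw [div_mul_eq_mul_div, div_le_div_iff₀ (by positivity) (by norm_num)]
    nlinarith
  linarith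
lemma testIneq_scale {n : ℕ} {U : Set (Euc n)} {f0 : Euc n → ℝ} {F : Euc n → Euc n}
    (hT : TestIneq U f0 F) {x0 : Euc n} {r t : ℝ} (hr : 0 < r) (ht : 0 ≤ t)
    (hball : ball x0 r ⊆ U) :
    TestIneq (ball 0 1) (fun y => t * r * f0 (x0 + r • y)) (fun y => t • F (x0 + r • y)) := by
  intro φ hφ hφc hφU hφ0
  set Φ : Euc n → ℝ := fun x => φ (r⁻¹ • (x - x0)) with hΦ
  have hback : ∀ y : Euc n, r⁻¹ • (x0 + r • y - x0) = y := by
    intro y; rw [add_sub_cancel_left, smul_smul, inv_mul_cancel₀ hr.ne', one_smul]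
  have hforw : ∀ x : Euc n, x0 + r • (r⁻¹ • (x - x0)) = x := by
    intro x; rw [smul_smul, mul_inv_cancel₀ hr.ne', one_smul, add_sub_cancel]
  have hΦd : ContDiff ℝ 1 Φ := hφ.comp (by fun_prop)
  set K : Set (Euc n) := (fun y => x0 + r • y) '' tsupport φ with hK
  have hKc : IsCompact K := IsCompact.image hφc (by fun_prop)
  have hsup : tsupport Φ ⊆ K := by
    apply closure_minimal _ hKc.isClosed
    intro x hx
    exact ⟨r⁻¹ • (x - x0), subset_closure hx, hforw x⟩
  have hKU : K ⊆ U := by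
    rintro _ ⟨y, hy, rfl⟩
    apply hball
    have := mem_ball_zero_iff.1 (hφU hy)
    rw [mem_ball, dist_eq_norm, add_sub_cancel_left, norm_smul, Real.norm_of_nonneg hr.le]
    nlinarith
  have hΦc : HasCompactSupport Φ := hKc.of_isClosed_subset isClosed_closure hsup
  obtain ⟨hint, hpos⟩ := hT Φ hΦd hΦc (hsup.trans hKU) (fun x => hφ0 _)
  have hfd : ∀ y, fderiv ℝ Φ (x0 + r • y) = r⁻¹ • fderiv ℝ φ y := by
    intro y
    have h1 : HasFDerivAt (fun x : Euc n => r⁻¹ • (x - x0)) (r⁻¹ • ContinuousLinearMap.id ℝ (Euc n))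
        (x0 + r • y) := ((hasFDerivAt_id _).sub_const x0).const_smul r⁻¹
    have h2 : HasFDerivAt φ (fderiv ℝ φ y) (r⁻¹ • (x0 + r • y - x0)) := by
      rw [hback]; exact (hφ.differentiable (by norm_num) y).hasFDerivAt
    have h3 := h2.comp (x0 + r • y) h1
    refine (HasFDerivAt.fderiv h3).trans ?_
    ext z; simp
  set H : Euc n → ℝ := fun x => f0 x * Φ x - fderiv ℝ Φ x (F x) with hH
  have heq : (fun y => t * r * f0 (x0 + r • y) * φ y - fderiv ℝ φ y (t • F (x0 + r • y))) =
      fun y => t * r * (fun z => H (x0 + z)) (r • y) := by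
    funext y
    have hΦy : Φ (x0 + r • y) = φ y := by simp only [hΦ, hback]
    simp only [hH, hfd, hΦy]
    simp only [map_smul, smul_eq_mul, smul_apply]
    field_simp
  have hi1 : Integrable (fun z => H (x0 + z)) := hint.comp_add_left x0
  rw [heq]
  refine ⟨(hi1.comp_smul hr.ne').const_mul _, ?_⟩
  rw [integral_const_mul, Measure.integral_comp_smul volume (fun z => H (x0 + z)) r,
    integral_add_left_eq_self H x0]
  exact mul_nonneg (by positivity) (smul_nonneg (abs_nonneg _) hpos)
lemma norm_gradient_eq {n : ℕ} (v : Euc n → ℝ) (x : Euc n) : ‖gradient v x‖ = ‖fderiv ℝ v x‖ := by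
  unfold gradient; rw [LinearIsometryEquiv.norm_map]

lemma isOpen_Ann (n : ℕ) (r₁ r₂ : ℝ) : IsOpen (Ann n r₁ r₂) := by
  unfold Ann
  exact (isOpen_lt continuous_const continuous_norm).inter (isOpen_lt continuous_norm continuous_const)

lemma essSup_facts {n : ℕ} {b : Euc n → ℝ} (hbl : LocBdd b) {r₁ r₂ : ℝ} :
    ∀ᵐ x ∂(volume.restrict (Ann n r₁ r₂)), b x ≤ essSup b (volume.restrict (Ann n r₁ r₂)) := by
  obtain ⟨C, hC⟩ := hbl _ (isCompact_closedBall (0 : Euc n) r₂)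
  apply ae_le_essSup
  refine ⟨C, ?_⟩
  rw [eventually_map]
  refine (ae_restrict_mem (isOpen_Ann n r₁ r₂).measurableSet).mono fun x hx => hC x ?_
  rw [mem_closedBall_zero_iff]; exact hx.2.le

lemma weak_test {n : ℕ} {A : Euc n → Euc n → Euc n} {b : Euc n → ℝ} {p C₁ C₂ α : ℝ} (hp : 1 < p)
    (hC₂ : 0 < C₂)
    (hα : 0 < α) (hA : StructCond A p C₁ C₂) (hbm : Measurable b) (hb0 : ∀ x, 0 ≤ b x)
    (hbl : LocBdd b) {r₁ r₂ h : ℝ} {v : Euc n → ℝ} (hv : ContDiffOn ℝ 1 v (Ann n r₁ r₂))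
    (hvc : ContinuousOn v (Ann n r₁ r₂))
    (hweak : IsWeakSol A b α
          (Set.indicator {x ∈ Ann n r₁ r₂ | 0 < v x} fun _ => h) (Ann n r₁ r₂) v) :
    TestIneq (Ann n r₁ r₂)
      (fun x => essSup b (volume.restrict (Ann n r₁ r₂)) * ‖fderiv ℝ v x‖ ^ α -
        Set.indicator {x ∈ Ann n r₁ r₂ | 0 < v x} (fun _ => h) x)
      (fun x => A x (gradient v x)) := by
  set U := Ann n r₁ r₂ with hU
  set B := essSup b (volume.restrict U) with hB
  have hUo : IsOpen U := isOpen_Ann n r₁ r₂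
  have hBae : ∀ᵐ x ∂(volume.restrict U), b x ≤ B := essSup_facts hbl
  set ind := Set.indicator {x ∈ U | 0 < v x} (fun _ => h) with hind
  set F : Euc n → Euc n := fun x => A x (gradient v x) with hF
  have hmd : Measurable (fderiv ℝ v) := measurable_fderiv ℝ v
  have hmn : Measurable (fun x => ‖fderiv ℝ v x‖ ^ α) := hmd.norm.pow_const α
  have hmg : Measurable (gradient v) :=
    (InnerProductSpace.toDual ℝ (Euc n)).symm.continuous.measurable.comp hmd
  have hmF : Measurable F := hA.1.comp (measurable_id.prodMk hmg)
  have hopen : IsOpen {x ∈ U | 0 < v x} := hvc.isOpen_inter_preimage hUo isOpen_Ioi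
  have hmi : Measurable ind := measurable_const.indicator hopen.measurableSet
  have hbd : ∀ K ⊆ U, IsCompact K → ∃ C, 0 ≤ C ∧ ∀ x ∈ K, ‖fderiv ℝ v x‖ ≤ C := by
    intro K hKU hK
    have hc : ContinuousOn (fderiv ℝ v) K :=
      (hv.continuousOn_fderiv_of_isOpen hUo (by norm_num)).mono hKU
    obtain ⟨C, hC⟩ := hK.exists_bound_of_continuousOn hc
    exact ⟨max C 0, le_max_right _ _, fun x hx => (hC x hx).trans (le_max_left _ _)⟩
  have hbF : ∀ K ⊆ U, IsCompact K → ∃ C, ∀ x ∈ K, ‖F x‖ ≤ C := by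
    intro K hKU hK
    obtain ⟨C, hC0, hC⟩ := hbd K hKU hK
    refine ⟨C₂ * C ^ (p - 1), fun x hx => ((hA.2 x _).2).trans ?_⟩
    rw [norm_gradient_eq]
    have := Real.rpow_le_rpow (norm_nonneg _) (hC x hx) (by linarith : 0 ≤ p - 1)
    gcongr
  have hbn : ∀ K ⊆ U, IsCompact K → ∃ C, 0 ≤ C ∧ ∀ x ∈ K, ‖fderiv ℝ v x‖ ^ α ≤ C := by
    intro K hKU hK
    obtain ⟨C, hC0, hC⟩ := hbd K hKU hK
    exact ⟨C ^ α, by positivity, fun x hx => Real.rpow_le_rpow (norm_nonneg _) (hC x hx) hα.le⟩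
  have hbi : ∀ x, |ind x| ≤ |h| := by
    intro x
    rw [hind, ← Real.norm_eq_abs, ← Real.norm_eq_abs]
    exact norm_indicator_le_norm_self (fun _ => h) x
  have hBn : ∀ K ⊆ U, IsCompact K → ∃ C, ∀ x ∈ K, |B * ‖fderiv ℝ v x‖ ^ α| ≤ C := by
    intro K hKU hK
    obtain ⟨C, hC0, hC⟩ := hbn K hKU hK
    refine ⟨|B| * C, fun x hx => ?_⟩
    rw [abs_mul, abs_of_nonneg (by positivity : 0 ≤ ‖fderiv ℝ v x‖ ^ α)]
    have := hC x hx
    gcongr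
  refine testIneq_of_smooth hUo ?_ hmF.aestronglyMeasurable ?_ ?_
  · exact ((hmn.const_mul B).sub hmi).aestronglyMeasurable
  · intro K hKU hK
    obtain ⟨D1, hD1⟩ := hBn K hKU hK
    obtain ⟨D2, hD2⟩ := hbF K hKU hK
    refine ⟨max (D1 + |h|) D2, fun x hx => ⟨?_, (hD2 x hx).trans (le_max_right _ _)⟩⟩
    refine le_trans (abs_sub _ _) (le_trans (add_le_add (hD1 x hx) (hbi x)) (le_max_left _ _))
  · intro φ hφ hφc hφU hφ0
    have hφ1 : ContDiff ℝ 1 φ := hφ.of_le (by exact_mod_cast le_top)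
    have hz : AEStronglyMeasurable (fun _ : Euc n => (0 : Euc n)) (volume.restrict U) :=
      aestronglyMeasurable_const
    have hi1 : Integrable (fun x => inner ℝ (A x (gradient v x)) (gradient φ x)) := by
      have := test_integrable (U := U) (f0 := fun _ => 0) (F := F) aestronglyMeasurable_const
        hmF.aestronglyMeasurable (fun K hKU hK => by
          obtain ⟨C, hC⟩ := hbF K hKU hK
          exact ⟨max C 0, fun x hx => ⟨by simp, (hC x hx).trans (le_max_left _ _)⟩⟩) hφ1 hφc hφU
      refine this.neg.congr (Filter.Eventually.of_forall fun x => ?_)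
      simp [inner_gradient_right, hF]
    have hi2 : Integrable (fun x => b x * ‖gradient v x‖ ^ α * φ x) := by
      have := test_integrable (U := U) (f0 := fun x => b x * ‖gradient v x‖ ^ α) (F := fun _ => 0)
        (by simp only [norm_gradient_eq]; exact (hbm.mul hmn).aestronglyMeasurable) hz
        (fun K hKU hK => by
          obtain ⟨C, hC0, hC⟩ := hbn K hKU hK
          obtain ⟨D, hD⟩ := hbl K hK
          refine ⟨max (D * C) 0, fun x hx => ⟨?_, by simp⟩⟩
          rw [norm_gradient_eq, abs_of_nonneg (mul_nonneg (hb0 x) (by positivity))]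
          exact (mul_le_mul (hD x hx) (hC x hx) (by positivity) ((hb0 x).trans (hD x hx))).trans
            (le_max_left _ _)) hφ1 hφc hφU
      simpa using this
    have hi3 : Integrable (fun x => ind x * φ x) := by
      have := test_integrable (U := U) (f0 := ind) (F := fun _ => 0) hmi.aestronglyMeasurable hz
        (fun K hKU hK => ⟨|h|, fun x hx => ⟨hbi x, by simp⟩⟩) hφ1 hφc hφU
      simpa using this
    have hi4 : Integrable (fun x => B * ‖fderiv ℝ v x‖ ^ α * φ x) := by
      have := test_integrable (U := U) (f0 := fun x => B * ‖fderiv ℝ v x‖ ^ α) (F := fun _ => 0)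
        (hmn.const_mul B).aestronglyMeasurable hz
        (fun K hKU hK => by
          obtain ⟨C, hC⟩ := hBn K hKU hK
          exact ⟨max C 0, fun x hx => ⟨(hC x hx).trans (le_max_left _ _), by simp⟩⟩) hφ1 hφc hφU
      simpa using this
    have hw := hweak φ hφ hφc hφU hφ0
    have hle : ∫ x in U, b x * ‖gradient v x‖ ^ α * φ x ≤ ∫ x in U, B * ‖fderiv ℝ v x‖ ^ α * φ x := by
      refine integral_mono_ae hi2.integrableOn hi4.integrableOn ?_
      refine hBae.mono fun x hx => ?_
      simp only [norm_gradient_eq]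
      have := hφ0 x
      gcongr
    have hset : ∫ x, ((B * ‖fderiv ℝ v x‖ ^ α - ind x) * φ x - fderiv ℝ φ x (F x)) =
        ∫ x in U, ((B * ‖fderiv ℝ v x‖ ^ α - ind x) * φ x - fderiv ℝ φ x (F x)) := by
      refine (setIntegral_eq_integral_of_forall_compl_eq_zero fun x hx => ?_).symm
      exact test_zero (f0 := fun x => B * ‖fderiv ℝ v x‖ ^ α - ind x) (fun h' => hx (hφU h'))
    have heq : ∀ x, (B * ‖fderiv ℝ v x‖ ^ α - ind x) * φ x - fderiv ℝ φ x (F x) =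
        (B * ‖fderiv ℝ v x‖ ^ α * φ x - ind x * φ x) - inner ℝ (A x (gradient v x)) (gradient φ x) := by
      intro x
      rw [inner_gradient_right]; simp [hF]; ring
    rw [hset]
    simp only [heq]
    rw [integral_sub (by exact (hi4.sub hi3).integrableOn) hi1.integrableOn,
      integral_sub hi4.integrableOn hi3.integrableOn]
    linarith

lemma local_est (n : ℕ) (hn : 2 ≤ n) (p C₁ C₂ α L γ : ℝ) (hp : 1 < p) (hC₁ : 0 < C₁) (hC₂ : 0 < C₂)
    (hα₁ : p - 1 ≤ α) (hα₂ : α ≤ p) (hL : 0 ≤ L) (hγ : 0 < γ) : ∃ C : ℝ, 0 < C ∧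
    ∀ (A : Euc n → Euc n → Euc n), StructCond A p C₁ C₂ →
    ∀ (U : Set (Euc n)) (v : Euc n → ℝ) (B h κ δ r : ℝ) (x0 : Euc n), IsOpen U →
    ContDiffOn ℝ 1 v U → 0 ≤ B → 0 ≤ h → 0 ≤ κ → 0 < δ → 0 < r → ball x0 r ⊆ U →
    (∀ x ∈ ball x0 r, v x ≤ κ + δ) → κ + γ * δ ≤ v x0 →
    B * (r / δ) ^ (p - 1 - α) * r ≤ L →
    TestIneq U (fun x => B * ‖fderiv ℝ v x‖ ^ α - Set.indicator {x ∈ U | 0 < v x} (fun _ => h) x)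
      (fun x => A x (gradient v x)) →
    (r / δ) ^ (p - 1) * r * h ≤ C := by
  obtain ⟨C, hC, hcore⟩ := core n hn p C₁ C₂ L γ hp hC₁ hC₂ hL hγ
  refine ⟨C, hC, fun A hA U v B h κ δ r x0 hU hv hB hh hκ hδ hr hball hup hlow hBL hT => ?_⟩
  set t : ℝ := (r / δ) ^ (p - 1) with ht
  have hrd : 0 < r / δ := by positivity
  have ht0 : 0 < t := by positivity
  have hT' := testIneq_scale hT hr ht0.le hball
  have hmem : ∀ y ∈ ball (0 : Euc n) 1, x0 + r • y ∈ ball x0 r := by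
    intro y hy
    have := mem_ball_zero_iff.1 hy
    rw [mem_ball, dist_eq_norm, add_sub_cancel_left, norm_smul, Real.norm_of_nonneg hr.le]
    nlinarith
  set w : Euc n → ℝ := fun y => (v (x0 + r • y) - κ) / δ with hw
  have hfd : ∀ y ∈ ball (0 : Euc n) 1, fderiv ℝ w y = (r / δ) • fderiv ℝ v (x0 + r • y) := by
    intro y hy
    have h1 : HasFDerivAt (fun y : Euc n => x0 + r • y) (r • ContinuousLinearMap.id ℝ (Euc n)) y :=
      ((hasFDerivAt_id y).const_smul r).const_add x0
    have h2 : HasFDerivAt v (fderiv ℝ v (x0 + r • y)) (x0 + r • y) :=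
      ((hv.contDiffAt (hU.mem_nhds (hball (hmem y hy)))).differentiableAt (by norm_num)).hasFDerivAt
    have h3 := ((h2.comp y h1).sub_const κ).const_mul δ⁻¹
    have h4 : w = fun y => δ⁻¹ * ((v ∘ fun y => x0 + r • y) y - κ) := by
      funext y; simp only [hw, Function.comp]; ring
    rw [h4, h3.fderiv]
    ext z; simp; ring
  refine hcore w _ _ (t * r * h) (by positivity) ?_ ?_ ?_ ?_ hT'
  · have : ContDiffOn ℝ 1 (fun y : Euc n => v (x0 + r • y)) (ball 0 1) :=
      hv.comp (by fun_prop) fun y hy => hball (hmem y hy)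
    exact (this.sub contDiffOn_const).div_const δ
  · intro y hy
    simp only [hw]
    rw [div_le_one hδ]; linarith [hup _ (hmem y hy)]
  · simp only [hw, smul_zero, add_zero]
    rw [le_div_iff₀ hδ]; linarith
  · intro y hy hwy
    set x := x0 + r • y with hx
    have hxU : x ∈ U := hball (hmem y hy)
    have hvx : 0 < v x := by
      have : 0 < v x - κ := by
        by_contra hcon
        have : (v x - κ) / δ ≤ 0 := div_nonpos_of_nonpos_of_nonneg (not_lt.1 hcon) hδ.le
        simp only [hw] at hwy
        linarith
      linarith
    have hindx : Set.indicator {x ∈ U | 0 < v x} (fun _ => h) x = h :=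
      Set.indicator_of_mem (show x ∈ {x ∈ U | 0 < v x} from ⟨hxU, hvx⟩) _
    have hnorm : ‖fderiv ℝ w y‖ = r / δ * ‖fderiv ℝ v x‖ := by
      rw [hfd y hy, norm_smul, Real.norm_of_nonneg hrd.le]
    set Y := ‖fderiv ℝ v x‖ with hY
    have hY0 : 0 ≤ Y := norm_nonneg _
    obtain ⟨hA1, hA2⟩ := hA.2 x (gradient v x)
    rw [norm_gradient_eq, ← hY] at hA1 hA2
    have htp : t * (r / δ) = (r / δ) ^ p := by
      rw [ht, ← Real.rpow_add_one hrd.ne']; congr 1; ring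
    refine ⟨?_, ?_, ?_⟩
    · rw [hindx, hnorm]
      have hX := le_one_add_rpow (q := α) (p := p) (X := r / δ * Y) (by linarith) hα₂ (by positivity)
      have e1 : t * r * (B * Y ^ α) = (B * (r / δ) ^ (p - 1 - α) * r) * (r / δ * Y) ^ α := by
        rw [Real.mul_rpow hrd.le hY0, Real.rpow_sub hrd (p - 1) α, ← ht]
        field_simp
      have e2 : (B * (r / δ) ^ (p - 1 - α) * r) * (r / δ * Y) ^ α ≤ L * (1 + (r / δ * Y) ^ p) := by
        gcongr
      have : t * r * (B * Y ^ α - h) = t * r * (B * Y ^ α) - t * r * h := by ring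
      rw [this, e1]; linarith
    · rw [hnorm, hfd y hy, Real.mul_rpow hrd.le hY0]
      simp only [map_smul, smul_apply, smul_eq_mul]
      rw [← inner_gradient_left, ← htp]
      calc C₁ * (t * (r / δ) * Y ^ p) = (t * (r / δ)) * (C₁ * Y ^ p) := by ring
        _ ≤ (t * (r / δ)) * inner ℝ (gradient v x) (A x (gradient v x)) := by gcongr
        _ = _ := by ring
    · rw [hnorm, norm_smul, Real.norm_of_nonneg ht0.le, Real.mul_rpow hrd.le hY0, ← ht]
      calc _ ≤ t * (C₂ * Y ^ (p - 1)) := by gcongr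
        _ = _ := by ring

lemma sphMax_facts {n : ℕ} (hn : 2 ≤ n) {v : Euc n → ℝ} {r₁ r₂ : ℝ} (h0 : 0 < r₁)
    (hv : ContinuousOn v {x : Euc n | r₁ ≤ ‖x‖ ∧ ‖x‖ ≤ r₂}) {ρ : ℝ} (h1 : r₁ ≤ ρ) (h2 : ρ ≤ r₂) :
    (∃ x : Euc n, ‖x‖ = ρ ∧ v x = sphMax v ρ) ∧ ∀ x : Euc n, ‖x‖ = ρ → v x ≤ sphMax v ρ := by
  have : Nonempty (Fin n) := ⟨⟨0, by omega⟩⟩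
  have : Nontrivial (Euc n) := inferInstance
  have hc : IsCompact (v '' Metric.sphere (0 : Euc n) ρ) := by
    apply (isCompact_sphere _ _).image_of_continuousOn
    apply hv.mono
    intro x hx
    rw [mem_sphere_zero_iff_norm] at hx
    exact ⟨by rw [hx]; exact h1, by rw [hx]; exact h2⟩
  have hne : (v '' Metric.sphere (0 : Euc n) ρ).Nonempty :=
    (NormedSpace.sphere_nonempty.2 (h0.le.trans h1)).image _
  constructor
  · obtain ⟨x, hx, hx2⟩ := hc.sSup_mem hne
    exact ⟨x, by simpa using hx, hx2⟩
  · intro x hx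
    exact le_csSup hc.bddAbove ⟨x, by simpa using hx, rfl⟩

lemma pigeon (N : ℕ) (hN : 0 < N) (f : ℕ → ℝ) :
    ∃ i < N, f (i + 1) - f i ≤ (f N - f 0) / N := by
  by_contra hcon
  push Not at hcon
  have h1 : ∑ i ∈ Finset.range N, (f N - f 0) / N < ∑ i ∈ Finset.range N, (f (i + 1) - f i) :=
    Finset.sum_lt_sum_of_nonempty (by simpa using hN.ne') (fun i hi => hcon i (by simpa using hi))
  rw [Finset.sum_range_sub] at h1
  have : (N : ℝ) ≠ 0 := by positivity
  simp at h1
  rw [mul_div_cancel₀ _ this] at h1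
  exact lt_irrefl _ h1

/-- Final arithmetic, first half. -/
lemma arith_K {p α δ R B : ℝ} (hδ : 0 < δ) (hR : 0 < R) :
    δ ^ (α - p + 1) * R ^ (p - α) * B = B * (R / δ) ^ (p - 1 - α) * R := by
  rw [Real.div_rpow hR.le hδ.le, show p - α = (p - 1 - α) + 1 by ring, Real.rpow_add_one hR.ne',
    show α - p + 1 = -(p - 1 - α) by ring, Real.rpow_neg hδ.le]
  ring

lemma arith_L {p α δ R B lam N : ℝ} (hα₁ : p - 1 ≤ α) (hα₂ : α ≤ p) (hδ : 0 < δ) (hR : 0 < R)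
    (hB : 0 ≤ B) (hN : 0 < N) (hK : B * (R / δ) ^ (p - 1 - α) * R ≤ lam * (2 * N)) :
    B * (R / (4 * δ)) ^ (p - 1 - α) * (R / (2 * N)) ≤ 4 * lam := by
  have h4 : (R / (4 * δ)) ^ (p - 1 - α) = 4 ^ (α - p + 1) * (R / δ) ^ (p - 1 - α) := by
    rw [show R / (4 * δ) = (R / δ) / 4 by field_simp, Real.div_rpow (by positivity) (by norm_num),
      show α - p + 1 = -(p - 1 - α) by ring, Real.rpow_neg (by norm_num)]
    ring
  have h5 : (4 : ℝ) ^ (α - p + 1) ≤ 4 := by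
    calc (4 : ℝ) ^ (α - p + 1) ≤ 4 ^ (1 : ℝ) :=
          Real.rpow_le_rpow_of_exponent_le (by norm_num) (by linarith)
      _ = 4 := by norm_num
  set K := B * (R / δ) ^ (p - 1 - α) * R with hKd
  have hK0 : 0 ≤ K := by positivity
  calc _ = (4 : ℝ) ^ (α - p + 1) * K / (2 * N) := by rw [h4, hKd]; ring
    _ ≤ 4 * (lam * (2 * N)) / (2 * N) := by gcongr
    _ = 4 * lam := by field_simp

lemma arith_C {p α δ R B lam N C₀ h : ℝ} (hδ : 0 < δ) (hR : 0 < R)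
    (hC₀ : 0 < C₀) (hlam : 0 < lam) (hN : 0 < N)
    (hK : lam * N ≤ B * (R / δ) ^ (p - 1 - α) * R)
    (hh : (R / (4 * δ)) ^ (p - 1) * (R / (2 * N)) * h ≤ C₀) :
    lam / (2 * 4 ^ (p - 1) * C₀) * R ^ α * h ≤ δ ^ α * B := by
  have h4 : (R / (4 * δ)) ^ (p - 1) = (R / δ) ^ (p - 1) / 4 ^ (p - 1) := by
    rw [show R / (4 * δ) = (R / δ) / 4 by field_simp, Real.div_rpow (by positivity) (by norm_num)]
  have hq : (0 : ℝ) < 4 ^ (p - 1) := by positivity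
  rw [h4] at hh
  set q : ℝ := 4 ^ (p - 1)
  have hRδ : 0 < R / δ := by positivity
  have hs : (R / δ) ^ (p - 1 - α) = (R / δ) ^ (p - 1) / (R / δ) ^ α := Real.rpow_sub hRδ _ _
  rw [hs] at hK
  have hα : (R / δ) ^ α = R ^ α / δ ^ α := Real.div_rpow hR.le hδ.le _
  rw [hα] at hK
  set T := (R / δ) ^ (p - 1) with hT
  have hT0 : 0 < T := by positivity
  have hRa : 0 < R ^ α := by positivity
  have hda : 0 < δ ^ α := by positivity
  have e1 : T * R * h ≤ C₀ * (q * (2 * N)) := by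
    have : T / q * (R / (2 * N)) * h = T * R * h / (q * (2 * N)) := by field_simp
    rw [this, div_le_iff₀ (by positivity)] at hh
    exact hh
  have e2 : lam * N * R ^ α ≤ B * T * δ ^ α * R := by
    have : B * (T / (R ^ α / δ ^ α)) * R = B * T * δ ^ α * R / R ^ α := by field_simp
    rw [this, le_div_iff₀ hRa] at hK
    exact hK
  have e3 : lam / (2 * q * C₀) * R ^ α * h = lam * R ^ α * h / (2 * q * C₀) := by ring
  rw [e3, div_le_iff₀ (by positivity)]
  have e4 := mul_le_mul_of_nonneg_left e1 (by positivity : 0 ≤ lam * R ^ α)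
  have e5 := mul_le_mul_of_nonneg_left e2 (by positivity : 0 ≤ C₀ * q * 2)
  have e6 : (T * R) * (lam * R ^ α * h) ≤ (T * R) * (δ ^ α * B * (2 * q * C₀)) := by
    linarith
  exact le_of_mul_le_mul_left e6 (by positivity)

/-- Lemma 4.10: if `M(·;v)` is nondecreasing on `[r₁, r₂]`,
`M(r₂;v) > M(r₁;v) ≥ γ M(r₂;v)` and the `b`-term is large
(`(M(r₂;v)-M(r₁;v))^{α-p+1}(r₂-r₁)^{p-α} ess sup b ≥ λ`), then
`(M(r₂;v) - M(r₁;v))^α ess sup b ≥ C (r₂ - r₁)^α h`. -/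
theorem stmt_18 (n : ℕ) (hn : 2 ≤ n) (p C₁ C₂ α : ℝ) (hp : 1 < p)
    (hC₁ : 0 < C₁) (hC₂ : 0 < C₂) (hα₁ : p - 1 ≤ α) (hα₂ : α ≤ p)
    (γ lam : ℝ) (hγ0 : 0 < γ) (hγ1 : γ < 1) (hlam : 0 < lam) :
    ∃ C : ℝ, 0 < C ∧
      ∀ (A : Euc n → Euc n → Euc n), StructCond A p C₁ C₂ →
      ∀ (b : Euc n → ℝ), Measurable b → (∀ x, 0 ≤ b x) → LocBdd b →
      ∀ (r₁ r₂ h : ℝ), 0 < r₁ → r₁ < r₂ → 0 ≤ h →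
      ∀ v : Euc n → ℝ,
        ContinuousOn v {x : Euc n | r₁ ≤ ‖x‖ ∧ ‖x‖ ≤ r₂} →
        (∀ x, r₁ ≤ ‖x‖ → ‖x‖ ≤ r₂ → 0 ≤ v x) →
        ContDiffOn ℝ 1 v (Ann n r₁ r₂) →
        IsWeakSol A b α
          (Set.indicator {x ∈ Ann n r₁ r₂ | 0 < v x} fun _ => h) (Ann n r₁ r₂) v →
        (∀ ρ₁ ρ₂ : ℝ, r₁ ≤ ρ₁ → ρ₁ ≤ ρ₂ → ρ₂ ≤ r₂ → sphMax v ρ₁ ≤ sphMax v ρ₂) →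
        sphMax v r₁ < sphMax v r₂ → γ * sphMax v r₂ ≤ sphMax v r₁ →
        lam ≤ (sphMax v r₂ - sphMax v r₁) ^ (α - p + 1) * (r₂ - r₁) ^ (p - α) *
            essSup b (volume.restrict (Ann n r₁ r₂)) →
        C * (r₂ - r₁) ^ α * h ≤
          (sphMax v r₂ - sphMax v r₁) ^ α * essSup b (volume.restrict (Ann n r₁ r₂)) := by
  obtain ⟨C₀, hC₀, hloc⟩ := local_est n hn p C₁ C₂ α (4 * lam) (γ / 2) hp hC₁ hC₂ hα₁ hα₂
    (by positivity) (by positivity)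
  refine ⟨lam / (2 * 4 ^ (p - 1) * C₀), by positivity, ?_⟩
  intro A hA b hbm hb0 hbl r₁ r₂ h hr₁ hr₁₂ hh v hvc hv0 hv hweak hmono hlt hγM hK
  have hα : 0 < α := by linarith
  have hT := weak_test hp hC₂ hα hA hbm hb0 hbl hv
    (hvc.mono fun x hx => ⟨hx.1.le, hx.2.le⟩) hweak
  set B := essSup b (volume.restrict (Ann n r₁ r₂)) with hBd
  set δ := sphMax v r₂ - sphMax v r₁ with hδd
  have hδ : 0 < δ := by rw [hδd]; linarith
  set R := r₂ - r₁ with hRd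
  have hR : 0 < R := by rw [hRd]; linarith
  have hB : 0 < B := by
    by_contra hcon
    have h1 : 0 ≤ δ ^ (α - p + 1) * R ^ (p - α) := by positivity
    have := mul_nonpos_of_nonneg_of_nonpos h1 (not_lt.1 hcon)
    linarith
  rw [arith_K hδ hR] at hK
  set K := B * (R / δ) ^ (p - 1 - α) * R with hKd
  set N : ℕ := ⌊K / lam⌋₊ with hNd
  have hKl : 1 ≤ K / lam := by rw [le_div_iff₀ hlam]; linarith
  have hN1 : 1 ≤ N := Nat.le_floor (by simpa using hKl)
  have hNr : (1 : ℝ) ≤ N := by exact_mod_cast hN1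
  have hN0 : (0 : ℝ) < N := by linarith
  have hNK : lam * N ≤ K := by
    have := Nat.floor_le (zero_le_one.trans hKl)
    rw [← hNd, le_div_iff₀ hlam] at this
    linarith
  have hKN : K ≤ lam * (2 * N) := by
    have := Nat.lt_floor_add_one (K / lam)
    rw [← hNd, div_lt_iff₀ hlam] at this
    have h2 : lam * 1 ≤ lam * N := mul_le_mul_of_nonneg_left hNr hlam.le
    linarith
  set r := R / (2 * N) with hrd
  have hr : 0 < r := by positivity
  have hRN : R = 2 * N * r := by rw [hrd]; field_simp
  set ρ : ℕ → ℝ := fun i => r₁ + 2 * r * i with hρ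
  have hρN : ρ N = r₂ := by
    have : r₁ + 2 * r * N = r₂ := by
      have : R = r₂ - r₁ := hRd
      linarith
    simpa [hρ] using this
  have hρ0 : ρ 0 = r₁ := by simp [hρ]
  obtain ⟨i, hiN, hi⟩ := pigeon N hN1 (fun i => sphMax v (ρ i))
  simp only [hρN, hρ0] at hi
  have hi' : ((i : ℝ) + 1) ≤ N := by exact_mod_cast hiN
  have hi0 : (0 : ℝ) ≤ i := by positivity
  have ha1 : r₁ ≤ ρ i := by simp only [hρ]; exact le_add_of_nonneg_right (by positivity)
  have ha2 : ρ (i + 1) = ρ i + 2 * r := by simp only [hρ]; push_cast; ring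
  have ha3 : ρ (i + 1) ≤ r₂ := by
    rw [← hρN]; simp only [hρ]; push_cast; gcongr
  obtain ⟨⟨x0, hx0, hvx0⟩, -⟩ := sphMax_facts hn hr₁ hvc (ρ := ρ i + r) (by linarith)
    (by linarith)
  have hballn : ∀ x ∈ ball x0 r, ρ i < ‖x‖ ∧ ‖x‖ < ρ (i + 1) := by
    intro x hx
    rw [mem_ball, dist_eq_norm] at hx
    have h1 := abs_norm_sub_norm_le x x0
    have h2 := abs_le.1 h1
    rw [hx0] at h2
    constructor <;> linarith [h2.1, h2.2]
  have hM1 : 0 ≤ sphMax v r₁ := by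
    obtain ⟨⟨x, hx, hvx⟩, -⟩ := sphMax_facts hn hr₁ hvc le_rfl hr₁₂.le
    rw [← hvx]
    exact hv0 x (by rw [hx]) (by rw [hx]; exact hr₁₂.le)
  have hMi : sphMax v r₁ ≤ sphMax v (ρ i) := hmono _ _ le_rfl ha1 (by linarith)
  have hδN : δ / N ≤ δ := div_le_self hδ.le hNr
  have hδN0 : 0 < δ / N := by positivity
  have hconc := hloc A hA (Ann n r₁ r₂) v B h (sphMax v (ρ i) - γ * (δ / N)) (2 * (δ / N)) r x0
    (isOpen_Ann n r₁ r₂) hv hB.le hh ?_ (by positivity) hr ?_ ?_ ?_ ?_ hT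
  · have e : r / (2 * (δ / N)) = R / (4 * δ) := by rw [hrd]; field_simp; norm_num
    rw [e] at hconc
    exact arith_C hδ hR hC₀ hlam hN0 hNK hconc
  · have h1 : γ * (δ / N) ≤ γ * sphMax v r₂ := by
      apply mul_le_mul_of_nonneg_left _ hγ0.le
      linarith
    linarith
  · intro x hx
    have := hballn x hx
    exact ⟨by linarith [this.1], by linarith [this.2]⟩
  · intro x hx
    have hx' := hballn x hx
    have h1 := (sphMax_facts hn hr₁ hvc (ρ := ‖x‖) (by linarith) (by linarith)).2 x rfl
    have h2 := hmono ‖x‖ (ρ (i + 1)) (by linarith) hx'.2.le ha3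
    have h3 : γ * (δ / N) ≤ δ / N := mul_le_of_le_one_left hδN0.le hγ1.le
    linarith
  · rw [hvx0]
    have := hmono (ρ i) (ρ i + r) ha1 (by linarith) (by linarith)
    linarith
  · have e : r / (2 * (δ / N)) = R / (4 * δ) := by rw [hrd]; field_simp; norm_num
    rw [e]
    exact arith_L hα₁ hα₂ hδ hR hB.le hN0 hKN
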